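/- Let w be a nonempty word over a totally ordered alphabet Σ that is not an inverse Lyndon word, and let ICFL(w) = (m1, …, mk). Let i be an integer with 1 < i ≤ k, and suppose that for each h with 1 ≤ h ≤ i−1 there are words r_h, s_h, t_h and letters a_h < b_h such that m_h = r_h a_h s_h and m_i = r_h b_h t_h. Then for each h with 1 ≤ h < i−1, the word r_{i−1} b_{i−1} is not a factor of m_h m_{h+1}. -/

import Mathlib

/-!
For words write `LexSep x y` for `x ≪ y`: the words differ at a first position, where the letter of
`x` is smaller.  An inverse Lyndon word `m` has no suffix `z` with `m ≪ z` (`not_sep_suffix`).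

Two properties of a canonical inverse Lyndon factorization `(m₁, …, m_k)` carry the proof, both
obtained by induction on its construction (`icfl_spec`): the factors are inverse Lyndon words, and
consecutive factors satisfy `m_h ≪ m_{h+1}` together with the border property that no nonempty
suffix of `m_h` is a prefix of `m_{h+1}`.  The border property rests on `bre_no_overlap`: a bounded
right extension of `p` has no nonempty prefix that is a suffix of `p`.

Let `u = r b` be the word in question, with `m_j = r a s`, `j = i - 1` and `a < b`, so `m_j ≪ u`.
If `u` occurs inside a single `m_g` with `g ≤ j`, then `m_g` has a suffix `z` beginning with `u`,
and `m_g ⪯ m_j ≪ z` contradicts that `m_g` is inverse Lyndon.  If `u` straddles the boundary of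
`m_h m_{h+1}`, then some nonempty prefix `x` of `r`, hence of `m_j`, is a suffix of `m_h`.  Since
`m_h ≪ m_{h+1} ⪯ m_j` and `m_h ≪ x` is impossible, `x` is a prefix of `m_{h+1}`, against the
border property.
-/

open List

section Defs

variable {α : Type*} [LinearOrder α]

/-- The lexicographic order `x ≺ y` on words over the ordered alphabet `α`. -/
def lexLt (x y : List α) : Prop := List.Lex (· < ·) x y

/-- The inverse `<_in` of the letter order. -/
def invLt (a b : α) : Prop := b < a

/-- `x ≪ y` : `x ≺ y` and `x` is not a (proper) prefix of `y`. -/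
def lexLtLt (x y : List α) : Prop := lexLt x y ∧ ¬ x <+: y

/-- `w` is a Lyndon word with respect to the letter order `r`:
nonempty, primitive, and `≺ᵣ`-smaller than each of its proper nonempty suffixes. -/
def IsLyndonWith (r : α → α → Prop) (w : List α) : Prop :=
  w ≠ [] ∧ (∀ (u : List α) (n : ℕ), w = (List.replicate n u).flatten → n = 1) ∧
  ∀ s : List α, s ≠ [] → s ≠ w → s <:+ w → List.Lex r w s

/-- `L` is the Lyndon factorization of `w` with respect to the letter order `r`:
a nonempty sequence of Lyndon words, nonincreasing for `≺ᵣ`, whose product is `w`. -/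
def IsCFLWith (r : α → α → Prop) (w : List α) (L : List (List α)) : Prop :=
  L ≠ [] ∧ L.flatten = w ∧ (∀ l ∈ L, IsLyndonWith r l) ∧
  List.Chain' (fun x y => ¬ List.Lex r x y) L

/-- an anti-prenecklace: a prefix of a power of an anti-Lyndon word. -/
def IsAntiPrenecklace (z : List α) : Prop :=
  ∃ (l : List α) (k : ℕ), IsLyndonWith invLt l ∧ z <+: (List.replicate k l).flatten

/-- an inverse Lyndon word: each proper nonempty suffix is `≺`-smaller than `w`. -/
def IsInvLyndon (w : List α) : Prop :=
  w ≠ [] ∧ ∀ s : List α, s ≠ [] → s ≠ w → s <:+ w → lexLt s w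

/-- `z` is a border of `w`: a proper prefix and a suffix of `w`. -/
def IsBorder (z w : List α) : Prop := z <+: w ∧ z ≠ w ∧ z <:+ w

/-- `(p, pbar) ∈ Pref_bre(w)`: `p` is an inverse Lyndon word which is a nonempty proper
prefix of `w = p v` and `pbar` is its bounded right extension. -/
def IsBRE (p pbar w : List α) : Prop :=
  IsInvLyndon p ∧ p ≠ [] ∧ p ≠ w ∧
  (∃ v : List α, w = p ++ v ∧ pbar <+: v) ∧ pbar ≠ [] ∧
  IsInvLyndon pbar ∧
  (∀ z' : List α, z' ≠ [] → z' ≠ pbar → z' <+: pbar → IsInvLyndon (p ++ z')) ∧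
  ¬ IsInvLyndon (p ++ pbar) ∧
  lexLt p pbar ∧ ¬ p <+: pbar

/-- The canonical inverse Lyndon factorization `ICFL(w) = M`. -/
inductive IsICFL : List α → List (List α) → Prop
  | base (w : List α) : IsInvLyndon w → IsICFL w [w]
  | ext (w p pbar v m1 : List α) (ms : List (List α)) :
      ¬ IsInvLyndon w → IsBRE p pbar w → w = p ++ v →
      IsICFL v (m1 :: ms) → pbar <+: m1 → IsICFL w (p :: m1 :: ms)
  | grp (w p pbar v r : List α) (a b : α) (s m1 : List α) (ms : List (List α)) :
      ¬ IsInvLyndon w → IsBRE p pbar w → w = p ++ v →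
      p = r ++ a :: s → pbar = r ++ [b] → a < b →
      IsICFL v (m1 :: ms) → m1 <+: r → IsICFL w ((p ++ m1) :: ms)

/-- the longest common prefix of two words. -/
def lcp : List α → List α → List α
  | a :: x, b :: y => if a = b then a :: lcp x y else []
  | _, _ => []

end Defs

section Aux

variable {α : Type*} [LinearOrder α]

/-! ### The relation `≪` and inverse Lyndon words -/

/-- The relation `x ≪ y`, in the form that exhibits the first position where `x` and `y` differ. -/
def LexSep (x y : List α) : Prop :=
  ∃ (c s t : List α) (d e : α), x = c ++ d :: s ∧ y = c ++ e :: t ∧ d < e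

lemma not_sep_nil_left (y : List α) : ¬ LexSep [] y := by
  rintro ⟨c, s, t, d, e, h, -⟩
  simp at h

lemma not_sep_nil_right (x : List α) : ¬ LexSep x [] := by
  rintro ⟨c, s, t, d, e, -, h, -⟩
  simp at h

lemma sep_cons (a b : α) (x y : List α) :
    LexSep (a :: x) (b :: y) ↔ a < b ∨ (a = b ∧ LexSep x y) := by
  constructor
  · rintro ⟨c, s, t, d, e, h1, h2, hl⟩
    cases c with
    | nil =>
      simp only [nil_append, cons.injEq] at h1 h2
      left; rw [h1.1, h2.1]; exact hl
    | cons c0 c =>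
      simp only [cons_append, cons.injEq] at h1 h2
      exact Or.inr ⟨h1.1.trans h2.1.symm, c, s, t, d, e, h1.2, h2.2, hl⟩
  · rintro (h | ⟨rfl, c, s, t, d, e, rfl, rfl, hl⟩)
    · exact ⟨[], x, y, a, b, rfl, rfl, h⟩
    · exact ⟨a :: c, s, t, d, e, rfl, rfl, hl⟩

lemma LexSep.trans {x y z : List α} (h1 : LexSep x y) (h2 : LexSep y z) : LexSep x z := by
  induction x generalizing y z with
  | nil => exact absurd h1 (not_sep_nil_left _)
  | cons a x ih =>
    cases y with
    | nil => exact absurd h1 (not_sep_nil_right _)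
    | cons b y =>
      cases z with
      | nil => exact absurd h2 (not_sep_nil_right _)
      | cons c z =>
        rw [sep_cons] at *
        rcases h1 with h1 | ⟨rfl, h1⟩ <;> rcases h2 with h2 | ⟨rfl, h2⟩
        · exact Or.inl (h1.trans h2)
        · exact Or.inl h1
        · exact Or.inl h2
        · exact Or.inr ⟨rfl, ih h1 h2⟩

lemma LexSep.irrefl (x : List α) : ¬ LexSep x x := by
  induction x with
  | nil => exact not_sep_nil_left _
  | cons a x ih => simp [sep_cons, ih]

lemma LexSep.mono {x y x' y' : List α} (h : LexSep x y) (hx : x <+: x') (hy : y <+: y') :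
    LexSep x' y' := by
  obtain ⟨c, s, t, d, e, rfl, rfl, hl⟩ := h
  obtain ⟨u, rfl⟩ := hx
  obtain ⟨v, rfl⟩ := hy
  exact ⟨c, s ++ u, t ++ v, d, e, by simp, by simp, hl⟩

lemma LexSep.append_left {x y : List α} (h : LexSep x y) (z : List α) : LexSep (z ++ x) (z ++ y) := by
  obtain ⟨c, s, t, d, e, rfl, rfl, hl⟩ := h
  exact ⟨z ++ c, s, t, d, e, by simp, by simp, hl⟩

lemma prefix_or_sep (x y : List α) : x <+: y ∨ y <+: x ∨ LexSep x y ∨ LexSep y x := by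
  induction x generalizing y with
  | nil => exact Or.inl nil_prefix
  | cons a x ih =>
    cases y with
    | nil => exact Or.inr (Or.inl nil_prefix)
    | cons b y =>
      rcases lt_trichotomy a b with h | rfl | h
      · exact Or.inr (Or.inr (Or.inl ((sep_cons _ _ _ _).2 (Or.inl h))))
      · simpa [sep_cons] using ih y
      · exact Or.inr (Or.inr (Or.inr ((sep_cons _ _ _ _).2 (Or.inl h))))

lemma lexLt_cons (a b : α) (x y : List α) :
    lexLt (a :: x) (b :: y) ↔ a < b ∨ (a = b ∧ lexLt x y) := by
  unfold lexLt
  constructor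
  · intro h
    cases h with
    | cons h => exact Or.inr ⟨rfl, h⟩
    | rel h => exact Or.inl h
  · rintro (h | ⟨rfl, h⟩)
    · exact List.Lex.rel h
    · exact List.Lex.cons h

lemma prefix_or_sep_of_lexLt {x y : List α} (h : lexLt x y) : x <+: y ∨ LexSep x y := by
  induction x generalizing y with
  | nil => exact Or.inl nil_prefix
  | cons a x ih =>
    cases y with
    | nil => cases h
    | cons b y =>
      rcases (lexLt_cons _ _ _ _).1 h with h' | ⟨rfl, h'⟩
      · exact Or.inr ((sep_cons _ _ _ _).2 (Or.inl h'))
      · simpa [sep_cons] using ih h'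

lemma not_sep_of_lexLt {x y : List α} (h : lexLt x y) : ¬ LexSep y x := by
  intro h'
  rcases prefix_or_sep_of_lexLt h with hp | hs
  · exact LexSep.irrefl _ (h'.mono (prefix_refl y) hp)
  · exact LexSep.irrefl _ (h'.trans hs)

lemma not_sep_suffix {m z : List α} (hm : IsInvLyndon m) (hz : z <:+ m) : ¬ LexSep m z := by
  intro h
  by_cases hz0 : z = []
  · subst hz0; exact not_sep_nil_right _ h
  by_cases hzm : z = m
  · subst hzm; exact LexSep.irrefl _ h
  exact not_sep_of_lexLt (hm.2 z hz0 hzm hz) h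

/-- A prefix `x` of `z` that stops before the first difference of `y ≪ z` is a prefix of `y`;
otherwise it already witnesses `y ≪ x`. -/
lemma LexSep.prefix_cases {x y z : List α} (h : LexSep y z) (hx : x <+: z) : x <+: y ∨ LexSep y x := by
  rcases prefix_or_sep x y with h1 | h1 | h1 | h1
  · exact Or.inl h1
  · exact absurd (h.mono (h1.trans hx) (prefix_refl z)) (LexSep.irrefl z)
  · exact absurd (h1.trans h) fun h2 => LexSep.irrefl z (h2.mono hx (prefix_refl z))
  · exact Or.inr h1

/-! ### Bounded right extensions -/

/-- A bounded right extension consists of the common prefix with `p` and a single larger letter: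
a longer one would have a proper prefix `r b` with `p r b` inverse Lyndon, although `p ≪ r b`. -/
lemma bre_shape {p pbar w : List α} (h : IsBRE p pbar w) :
    ∃ (r s : List α) (a b : α), p = r ++ a :: s ∧ pbar = r ++ [b] ∧ a < b := by
  obtain ⟨-, -, -, -, -, -, hz, -, hlt, hnp⟩ := h
  obtain ⟨r, s, t, a, b, hp, hb, hab⟩ := (prefix_or_sep_of_lexLt hlt).resolve_left hnp
  refine ⟨r, s, a, b, hp, ?_, hab⟩
  by_contra hne
  have hpre : r ++ [b] <+: pbar := ⟨t, by simp [hb]⟩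
  refine not_sep_suffix (hz (r ++ [b]) (by simp) (fun h => hne h.symm) hpre)
    (suffix_append p _) ?_
  exact ⟨r, s ++ (r ++ [b]), [], a, b, by simp [hp], by simp, hab⟩

/-- Write `p = r a s` and let `r b` be the extension.  A nonempty suffix `x` of `p` with `r = x r'`
would force `r' a` to be a prefix of `r`, because `p` and `p r` are inverse Lyndon.  Then
`r b ≪ r' b`, and the extension `r b` would not be inverse Lyndon. -/
lemma bre_no_overlap {p pbar w x : List α} (h : IsBRE p pbar w) (hx0 : x ≠ [])
    (hxp : x <:+ p) : ¬ x <+: pbar := by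
  intro hxb
  obtain ⟨r, s, a, b, hp, hb, hab⟩ := bre_shape h
  obtain ⟨hpI, -, -, -, -, hbI, hz, -, -, -⟩ := h
  rw [hb, prefix_concat_iff] at hxb
  rcases hxb with hxb | ⟨r', hr⟩
  · refine not_sep_suffix hpI hxp ?_
    exact ⟨r, s, [], a, b, hp, by simp [hxb], hab⟩
  have hr0 : r ≠ [] := by rintro rfl; simp at hr; exact hx0 hr.1
  have hprI : IsInvLyndon (p ++ r) :=
    hz r hr0 (by simp [hb]) (by simp [hb])
  have hpq : p = x ++ (r' ++ a :: s) := by rw [hp, ← hr]; simp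
  have hq : r' ++ a :: s <:+ p := ⟨x, hpq.symm⟩
  have hra : r' ++ [a] <+: r := by
    have hlen : (r' ++ [a]).length ≤ r.length := by
      have := length_pos_iff.2 hx0
      rw [← hr]; simp; omega
    have hqa : r' ++ [a] <+: r' ++ a :: s := ⟨s, by simp⟩
    have hrp : r <+: p := ⟨a :: s, hp.symm⟩
    rcases prefix_or_sep r (r' ++ a :: s) with h1 | h1 | h1 | h1
    · exact prefix_of_prefix_length_le hqa h1 hlen
    · exact hqa.trans h1
    · exact absurd (h1.mono hrp (prefix_refl _)) (not_sep_suffix hpI hq)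
    · refine absurd ?_ (not_sep_suffix hprI (z := x ++ r) ?_)
      · exact (h1.append_left x).mono (by rw [hpq]; exact prefix_append _ _) (prefix_refl _)
      · obtain ⟨u, hu⟩ := hxp
        exact ⟨u, by rw [← hu]; simp⟩
  refine not_sep_suffix hbI (z := r' ++ [b]) ⟨x, by rw [hb, ← hr]; simp⟩ ?_
  have h0 : LexSep (r' ++ [a]) (r' ++ [b]) := ⟨r', [], [], a, b, rfl, rfl, hab⟩
  exact h0.mono (hra.trans (by simp [hb])) (prefix_refl _)

/-! ### Consecutive factors of the canonical factorization -/

/-- The relation between consecutive factors: `x ≪ y`, and the border property that no nonempty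
suffix of `x` is a prefix of `y`. -/
def BorderSep (x y : List α) : Prop :=
  LexSep x y ∧ ∀ z : List α, z ≠ [] → z <:+ x → ¬ z <+: y

lemma icfl_spec {w : List α} {M : List (List α)} (h : IsICFL w M) :
    (∀ m ∈ M, IsInvLyndon m) ∧ List.IsChain BorderSep M := by
  induction h with
  | base w hw => simpa using hw
  | ext w p pbar v m1 ms hw hbre hwv hv hpre ih =>
    obtain ⟨ihI, ihC⟩ := ih
    refine ⟨?_, ?_⟩
    · intro m hm
      rcases mem_cons.1 hm with rfl | hm
      · exact hbre.1
      · exact ihI m hm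
    refine List.IsChain.cons_cons ?_ ihC
    obtain ⟨r, s, a, b, hp, hb, hab⟩ := bre_shape hbre
    have hsep : LexSep p pbar := ⟨r, s, [], a, b, hp, hb, hab⟩
    refine ⟨hsep.mono (prefix_refl _) hpre, fun z hz0 hzp hzm => ?_⟩
    rcases prefix_or_prefix_of_prefix hzm hpre with h1 | h1
    · exact bre_no_overlap hbre hz0 hzp h1
    · exact not_sep_suffix hbre.1 hzp (hsep.mono (prefix_refl _) h1)
  | grp w p pbar v r a b s m1 ms hw hbre hwv hp hb hab hv hpre ih =>
    obtain ⟨ihI, ihC⟩ := ih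
    have hm1p : m1 <+: p := hpre.trans ⟨a :: s, hp.symm⟩
    have hpm : IsInvLyndon (p ++ m1) := by
      obtain ⟨-, -, -, -, -, -, hz, -, -, -⟩ := hbre
      refine hz m1 (ihI m1 (by simp)).1 ?_ (hpre.trans (by simp [hb]))
      rintro rfl
      have := hpre.length_le
      simp [hb] at this
    refine ⟨?_, ?_⟩
    · intro m hm
      rcases mem_cons.1 hm with rfl | hm
      · exact hpm
      · exact ihI m (mem_cons_of_mem _ hm)
    cases ms with
    | nil => simp
    | cons m2 ms =>
      rw [List.isChain_cons_cons] at ihC ⊢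
      obtain ⟨⟨hs, hbd⟩, hC⟩ := ihC
      have hm1 : m1 <+: p ++ m1 := hm1p.trans (prefix_append _ _)
      refine ⟨⟨hs.mono hm1 (prefix_refl _), fun z hz0 hzs hzp => ?_⟩, hC⟩
      -- A prefix `z` of `m2` reaching past the first difference with `m1` would exceed `p m1`.
      rcases hs.prefix_cases hzp with h1 | h1
      · exact hbd z hz0 (suffix_of_suffix_length_le hzs (suffix_append p m1) h1.length_le) hzp
      · exact not_sep_suffix hpm hzs (h1.mono hm1 (prefix_refl _))

end Aux

/-- Lemma `Lemma2`: with `ICFL(w) = (m₁, …, m_k)`, `m_h = r_h a_h s_h`,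
`m_i = r_h b_h t_h`, `a_h < b_h` for each `h < i` (0-based), the word
`r_{i-1} b_{i-1}` is not a factor of `m_h m_{h+1}` for `h + 1 < i`. -/
theorem stmt13 {α : Type*} [LinearOrder α] (w : List α) (hw : w ≠ [])
    (hwn : ¬ IsInvLyndon w)
    (M : List (List α)) (hM : IsICFL w M)
    (i : ℕ) (hi0 : 0 < i) (hik : i < M.length)
    (r s t : ℕ → List α) (a b : ℕ → α)
    (hdec : ∀ h, h < i →
      M[h]! = r h ++ a h :: s h ∧ M[i]! = r h ++ b h :: t h ∧ a h < b h) :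
    ∀ h, h + 1 < i → ¬ (r (i-1) ++ [b (i-1)]) <:+: (M[h]! ++ M[h+1]!) := by
  intro h hh hinf
  obtain ⟨hI, hC⟩ := icfl_spec hM
  have hP : ∀ g k (hgk : g < k) (hk : k < M.length), LexSep (M[g]'(hgk.trans hk)) M[k] := by
    have : IsTrans (List α) LexSep := ⟨fun _ _ _ => LexSep.trans⟩
    have hp : List.Pairwise LexSep M :=
      List.isChain_iff_pairwise.1 (hC.imp fun _ _ hxy => hxy.1)
    intro g k hgk hk
    exact List.pairwise_iff_getElem.1 hp g k _ hk hgk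
  have hj : i - 1 < M.length := by omega
  obtain ⟨hmj, -, hab⟩ := hdec (i - 1) (by omega)
  rw [getElem!_pos M (i - 1) hj] at hmj
  rw [getElem!_pos M h (by omega), getElem!_pos M (h + 1) (by omega)] at hinf
  have hju : LexSep M[i - 1] (r (i - 1) ++ [b (i - 1)]) :=
    ⟨r (i - 1), s (i - 1), [], _, _, hmj, rfl, hab⟩
  have hin : ∀ g (hg : g ≤ i - 1), ¬ (r (i - 1) ++ [b (i - 1)]) <:+: M[g] := by
    rintro g hg ⟨p, q, hpq⟩
    have hgu : LexSep M[g] (r (i - 1) ++ [b (i - 1)]) := by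
      rcases hg.eq_or_lt with rfl | hlt
      · exact hju
      · exact (hP g (i - 1) hlt hj).trans hju
    exact not_sep_suffix (hI M[g] (List.getElem_mem _)) ⟨p, by rw [← hpq]; simp⟩
      (hgu.mono (prefix_refl _) (prefix_append _ q))
  rcases infix_append_iff_ne_nil.1 hinf with h1 | h1 | ⟨x, y, hx0, hy0, hxy, hx, -⟩
  · exact hin h (by omega) h1
  · exact hin (h + 1) (by omega) h1
  have hxr : x <+: r (i - 1) := by
    -- `y` is nonempty, so the last letter of `r b` is not part of `x`.
    rcases prefix_concat_iff.1 (⟨y, hxy.symm⟩ : x <+: r (i - 1) ++ [b (i - 1)]) with h1 | h1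
    · rw [h1] at hxy
      exact absurd (self_eq_append_right.1 hxy) hy0
    · exact h1
  have hxj : x <+: M[i - 1] := by
    rw [hmj]; exact hxr.trans (prefix_append _ _)
  obtain ⟨hs, hbd⟩ := List.isChain_iff_getElem.1 hC h (by omega)
  have hxh : x <+: M[h + 1] := by
    rcases (show h + 1 ≤ i - 1 by omega).eq_or_lt with heq | hlt
    · simpa only [heq] using hxj
    · refine ((hP (h + 1) (i - 1) hlt hj).prefix_cases hxj).resolve_right fun h1 => ?_
      exact not_sep_suffix (hI M[h] (List.getElem_mem _)) hx (hs.trans h1)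
  exact hbd x hx0 hx hxh
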